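/- With T the time evolution of qP_IV, one has the identity T(f₀)·T(f₁)·T(f₂) = (a₀a₁a₂)²·f₀f₁f₂ in ℂ(a₀,a₁,a₂,f₀,f₁,f₂); that is, the product of the three rational functions aⱼa_{j+1}f_{j+1}·(1 + a_{j+2}f_{j+2} + a_{j+2}aⱼf_{j+2}fⱼ)/(1 + aⱼfⱼ + aⱼa_{j+1}fⱼf_{j+1}) over j = 0,1,2 (indices modulo 3) equals q²f₀f₁f₂ where q = a₀a₁a₂. Consequently, if f₀f₁f₂ = t², the evolution T is consistent with the q-shift t ↦ qt. -/

import Mathlib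

/-!
The invariance relation T(f₀)T(f₁)T(f₂) = q²f₀f₁f₂ (q = a₀a₁a₂) for the
discrete time evolution T of the fourth q-Painlevé equation qP_IV, an
identity in the rational function field L = ℂ(a₀,a₁,a₂,f₀,f₁,f₂).
-/

open MvPolynomial

noncomputable section

abbrev PolyQ := MvPolynomial (ZMod 3 ⊕ ZMod 3) ℂ

abbrev LQ := FractionRing PolyQ

/-- The multiplicative root parameters a₀, a₁, a₂. -/
def av (j : ZMod 3) : LQ := algebraMap PolyQ LQ (X (Sum.inl j))

/-- The dependent variables f₀, f₁, f₂. -/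
def fv (j : ZMod 3) : LQ := algebraMap PolyQ LQ (X (Sum.inr j))

/-- The images T(fⱼ) of the dependent variables under the time evolution of
qP_IV. -/
def Tf (j : ZMod 3) : LQ :=
  av j * av (j + 1) * fv (j + 1) *
    (1 + av (j + 2) * fv (j + 2) + av (j + 2) * av j * fv (j + 2) * fv j) /
    (1 + av j * fv j + av j * av (j + 1) * fv j * fv (j + 1))

/-- The denominator of `Tf j`. The second factor of the numerator of `Tf j` is the denominator of
`Tf (j + 2)`, so in the product over `j` these factors cancel once they are known to be nonzero. -/
def denomTf (j : ZMod 3) : LQ :=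
  1 + av j * fv j + av j * av (j + 1) * fv j * fv (j + 1)

lemma denomTf_ne_zero (j : ZMod 3) : denomTf j ≠ 0 := by
  -- `denomTf j` comes from a polynomial whose value at the origin is `1`.
  have h : denomTf j = algebraMap PolyQ LQ
      (1 + X (Sum.inl j) * X (Sum.inr j) +
        X (Sum.inl j) * X (Sum.inl (j + 1)) * X (Sum.inr j) * X (Sum.inr (j + 1))) := by
    simp only [denomTf, av, fv, map_add, map_mul, map_one]
  rw [h, Ne, FaithfulSMul.algebraMap_eq_zero_iff]
  intro h0
  have h1 := congrArg (MvPolynomial.eval (fun _ => (0 : ℂ))) h0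
  simp at h1

lemma Tf_eq (j : ZMod 3) :
    Tf j = av j * av (j + 1) * fv (j + 1) * denomTf (j + 2) / denomTf j := by
  have h : j + 2 + 1 = j := by revert j; decide
  simp only [Tf, denomTf, h]

/-- T(f₀)·T(f₁)·T(f₂) = (a₀a₁a₂)²·f₀f₁f₂, so that with
f₀f₁f₂ = t² the time evolution of qP_IV is consistent with the q-shift
t ↦ qt, q = a₀a₁a₂. -/
theorem qPIV_product_identity :
    Tf 0 * Tf 1 * Tf 2 = (av 0 * av 1 * av 2) ^ 2 * (fv 0 * fv 1 * fv 2) := by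
  have h0 := denomTf_ne_zero 0
  have h1 := denomTf_ne_zero 1
  have h2 := denomTf_ne_zero 2
  have e1 : (1 : ZMod 3) + 1 = 2 := by decide
  have e2 : (1 : ZMod 3) + 2 = 0 := by decide
  have e3 : (2 : ZMod 3) + 1 = 0 := by decide
  have e4 : (2 : ZMod 3) + 2 = 1 := by decide
  simp only [Tf_eq, zero_add, e1, e2, e3, e4]
  field_simp

end
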